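/- arXiv:2511.10000 — 2 statements merged into one kernel-verified Lean document; each statement's English description precedes it below -/
import Mathlib

section
/- For every multi-level apportionment instance, every non-negative integer h, and every tie-breaking, the allocation of h seats produced by the upper-compliant multi-level quota method fulfills upper quota. Moreover, the method satisfies house monotonicity: when the total number of seats increases from h to h+1, every node receives at least as many seats as before. -/
/-- A multi-level apportionment instance: a rooted tree on nodes `0, …, n`
(root `0`, encoded by a parent function with `parent i < i` for `i ≠ 0`),
together with entitlements `W`. -/
structure MLA where
  n : ℕ
  parent : Fin (n + 1) → Fin (n + 1)
  parent_lt : ∀ i : Fin (n + 1), i ≠ 0 → (parent i : ℕ) < (i : ℕ)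
  W : Fin (n + 1) → ℝ
  W_pos : ∀ i, 0 < W i
  W_le_one : ∀ i, W i ≤ 1
  W_root : W 0 = 1
  W_sum : ∀ i : Fin (n + 1),
    (Finset.univ.filter (fun c => c ≠ 0 ∧ parent c = i)).Nonempty →
    ∑ c ∈ Finset.univ.filter (fun c => c ≠ 0 ∧ parent c = i), W c = 1

namespace MLA

variable (T : MLA)

/-- The set of children of node `i`. -/
def children (i : Fin (T.n + 1)) : Finset (Fin (T.n + 1)) :=
  Finset.univ.filter (fun c => c ≠ 0 ∧ T.parent c = i)

/-- The ancestor set `A(i)`: `A(0) = {0}` and `A(i) = {parent i} ∪ A(parent i)`. -/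
def ancestors (i : Fin (T.n + 1)) : Finset (Fin (T.n + 1)) :=
  if h : i = 0 then {0} else insert (T.parent i) (ancestors (T.parent i))
termination_by (i : ℕ)
decreasing_by exact T.parent_lt i h

/-- The entitlement of node `i` relative to the root: `R i = ∏_{a ∈ A(i) ∪ {i}} W a`. -/
def R (i : Fin (T.n + 1)) : ℝ := ∏ a ∈ insert i (T.ancestors i), T.W a

/-- `V` is an allocation of `h` seats. -/
def IsAlloc (h : ℕ) (V : Fin (T.n + 1) → ℕ) : Prop :=
  V 0 = h ∧ ∀ i, (T.children i).Nonempty → V i = ∑ c ∈ T.children i, V c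

/-- `V` fulfills lower quota: `V i ≥ LQ i = max_{a ∈ A(i)} ⌊(R i / R a) · V a⌋`. -/
def FulfillsLowerQuota (V : Fin (T.n + 1) → ℕ) : Prop :=
  ∀ i, ∀ a ∈ T.ancestors i, ⌊T.R i / T.R a * (V a : ℝ)⌋ ≤ (V i : ℤ)

/-- `V` fulfills upper quota: `V i ≤ UQ i = min_{a ∈ A(i)} ⌈(R i / R a) · V a⌉`. -/
def FulfillsUpperQuota (V : Fin (T.n + 1) → ℕ) : Prop :=
  ∀ i, ∀ a ∈ T.ancestors i, (V i : ℤ) ≤ ⌈T.R i / T.R a * (V a : ℝ)⌉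


/-- `P` is the set of nodes receiving the new seat in one step of an iterative
method with selection criterion `crit` (to be minimized among children) and
eligibility constraint `elig`: `P` is a root-to-leaf path, each non-root node on
the path is an eligible child of its parent minimizing `crit` among all eligible
children, and the seat counts along `P` each increase by one. -/
def IsStepWith (crit : (Fin (T.n + 1) → ℕ) → Fin (T.n + 1) → ℝ)
    (elig : (Fin (T.n + 1) → ℕ) → Fin (T.n + 1) → Prop)
    (P : Finset (Fin (T.n + 1))) (Vh Vh1 : Fin (T.n + 1) → ℕ) : Prop :=
  (0 : Fin (T.n + 1)) ∈ P ∧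
  (∀ i ∈ P, i ≠ 0 → T.parent i ∈ P) ∧
  (∀ i ∈ P, (T.children i).Nonempty → ∃ c ∈ T.children i, c ∈ P) ∧
  (∀ c ∈ P, ∀ d ∈ P, c ≠ 0 → d ≠ 0 → T.parent c = T.parent d → c = d) ∧
  (∀ c ∈ P, c ≠ 0 → elig Vh c ∧
    ∀ d ∈ T.children (T.parent c), elig Vh d → crit Vh c ≤ crit Vh d) ∧
  (∀ i, Vh1 i = Vh i + if i ∈ P then 1 else 0)

/-- `V : ℕ → (nodes → ℕ)` is a run of the iterative method given by `crit` and
`elig` (with arbitrary tie-breaking): `V 0` is the all-zero allocation and each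
`V (h+1)` is obtained from `V h` by allocating one more seat along a path. -/
def IsRun (crit : (Fin (T.n + 1) → ℕ) → Fin (T.n + 1) → ℝ)
    (elig : (Fin (T.n + 1) → ℕ) → Fin (T.n + 1) → Prop)
    (V : ℕ → Fin (T.n + 1) → ℕ) : Prop :=
  (∀ i, V 0 i = 0) ∧ ∀ h, ∃ P, T.IsStepWith crit elig P (V h) (V (h + 1))

/-- Adams' criterion: a child `c` minimizing `V c / R c` receives the seat. -/
noncomputable def adamsCrit (V : Fin (T.n + 1) → ℕ) (c : Fin (T.n + 1)) : ℝ :=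
  (V c : ℝ) / T.R c

/-- Jefferson's criterion: a child `c` minimizing `(V c + 1) / R c` receives the seat. -/
noncomputable def jeffersonCrit (V : Fin (T.n + 1) → ℕ) (c : Fin (T.n + 1)) : ℝ :=
  ((V c : ℝ) + 1) / T.R c

/-- Trivial eligibility constraint: every child is eligible. -/
def trivElig (_ : Fin (T.n + 1) → ℕ) (_ : Fin (T.n + 1)) : Prop := True

/-- Eligibility constraint of the quota method: `V c / W c < V (parent c) + 1`. -/
def quotaElig (V : Fin (T.n + 1) → ℕ) (c : Fin (T.n + 1)) : Prop :=
  (V c : ℝ) / T.W c < (V (T.parent c) : ℝ) + 1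

/-- Eligibility constraint of the upper-compliant quota method:
`V c / R c < (V a + 1) / R a` for every ancestor `a` of `c`. -/
def ucElig (V : Fin (T.n + 1) → ℕ) (c : Fin (T.n + 1)) : Prop :=
  ∀ a ∈ T.ancestors c, (V c : ℝ) / T.R c < ((V a : ℝ) + 1) / T.R a

end MLA

/-!
Clearing denominators, eligibility of a child `c` says exactly that, for each ancestor `a` of `c`,
the count `V c + 1` is at most the upper quota computed from `V a + 1`. Whenever `c` receives a
seat, all its ancestors do as well, so `c` stays within upper quota. A node that receives no seat
keeps its count, while its upper quota can only grow because seat counts never decrease.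
-/

namespace MLA

variable {T : MLA}

lemma R_pos (i : Fin (T.n + 1)) : 0 < T.R i :=
  Finset.prod_pos fun a _ => T.W_pos a

lemma ancestors_zero : T.ancestors 0 = {0} := by
  rw [ancestors, dif_pos rfl]

lemma ancestors_of_ne_zero {i : Fin (T.n + 1)} (hi : i ≠ 0) :
    T.ancestors i = insert (T.parent i) (T.ancestors (T.parent i)) := by
  rw [ancestors, dif_neg hi]

lemma ancestors_subset_of_parent_mem {P : Finset (Fin (T.n + 1))}
    (hP : ∀ i ∈ P, i ≠ 0 → T.parent i ∈ P) {i : Fin (T.n + 1)} (hi : i ∈ P) :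
    T.ancestors i ⊆ P := by
  induction i using ancestors.induct T with
  | case1 => rwa [ancestors_zero, Finset.singleton_subset_iff]
  | case2 i hi0 ih =>
    have hparent : T.parent i ∈ P := hP i hi hi0
    rw [ancestors_of_ne_zero hi0]
    exact Finset.insert_subset hparent (ih hparent)

lemma ucElig_iff_add_one_le_ceil {V : Fin (T.n + 1) → ℕ} {c : Fin (T.n + 1)} :
    T.ucElig V c ↔
      ∀ a ∈ T.ancestors c, (V c : ℤ) + 1 ≤ ⌈T.R c / T.R a * ((V a : ℝ) + 1)⌉ := by
  refine forall₂_congr fun a _ => ?_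
  rw [Int.add_one_le_iff, Int.lt_ceil, Int.cast_natCast, div_lt_iff₀' (R_pos c), mul_div_assoc',
    div_mul_eq_mul_div]

lemma fulfillsUpperQuota_zero : T.FulfillsUpperQuota 0 := by
  simp [FulfillsUpperQuota]

section Step

variable {crit : (Fin (T.n + 1) → ℕ) → Fin (T.n + 1) → ℝ}
  {elig : (Fin (T.n + 1) → ℕ) → Fin (T.n + 1) → Prop}
  {P : Finset (Fin (T.n + 1))} {V V' : Fin (T.n + 1) → ℕ} {i : Fin (T.n + 1)}

lemma IsStepWith.ancestors_subset (hstep : T.IsStepWith crit elig P V V') (hi : i ∈ P) :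
    T.ancestors i ⊆ P :=
  ancestors_subset_of_parent_mem hstep.2.1 hi

lemma IsStepWith.elig_of_mem (hstep : T.IsStepWith crit elig P V V') (hi : i ∈ P) (hi0 : i ≠ 0) :
    elig V i :=
  (hstep.2.2.2.2.1 i hi hi0).1

lemma IsStepWith.apply_eq (hstep : T.IsStepWith crit elig P V V') (i : Fin (T.n + 1)) :
    V' i = V i + if i ∈ P then 1 else 0 :=
  hstep.2.2.2.2.2 i

lemma IsStepWith.apply_of_mem (hstep : T.IsStepWith crit elig P V V') (hi : i ∈ P) :
    V' i = V i + 1 := by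
  rw [hstep.apply_eq, if_pos hi]

lemma IsStepWith.apply_of_notMem (hstep : T.IsStepWith crit elig P V V') (hi : i ∉ P) :
    V' i = V i := by
  rw [hstep.apply_eq, if_neg hi, add_zero]

lemma IsStepWith.le (hstep : T.IsStepWith crit elig P V V') : V ≤ V' := fun i =>
  (Nat.le_add_right _ _).trans_eq (hstep.apply_eq i).symm

lemma IsStepWith.le_ceil_of_mem (hstep : T.IsStepWith crit T.ucElig P V V') (hi : i ∈ P)
    (hi0 : i ≠ 0) {a : Fin (T.n + 1)} (ha : a ∈ T.ancestors i) :
    (V' i : ℤ) ≤ ⌈T.R i / T.R a * (V' a : ℝ)⌉ := by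
  rw [hstep.apply_of_mem hi, hstep.apply_of_mem (hstep.ancestors_subset hi ha)]
  push_cast
  exact ucElig_iff_add_one_le_ceil.mp (hstep.elig_of_mem hi hi0) a ha

lemma IsStepWith.le_ceil_of_notMem (hstep : T.IsStepWith crit elig P V V') (hi : i ∉ P)
    {a : Fin (T.n + 1)} (hquota : (V i : ℤ) ≤ ⌈T.R i / T.R a * (V a : ℝ)⌉) :
    (V' i : ℤ) ≤ ⌈T.R i / T.R a * (V' a : ℝ)⌉ := by
  have hratio : 0 ≤ T.R i / T.R a := (div_pos (R_pos i) (R_pos a)).le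
  have hle : V a ≤ V' a := hstep.le a
  rw [hstep.apply_of_notMem hi]
  exact hquota.trans (by gcongr)

lemma IsStepWith.fulfillsUpperQuota (hstep : T.IsStepWith crit T.ucElig P V V')
    (hV : T.FulfillsUpperQuota V) : T.FulfillsUpperQuota V' := by
  intro i a ha
  rcases eq_or_ne i 0 with rfl | hi0
  · obtain rfl : a = 0 := by rwa [ancestors_zero, Finset.mem_singleton] at ha
    rw [div_self (R_pos 0).ne', one_mul, Int.ceil_natCast]
  · by_cases hi : i ∈ P
    · exact hstep.le_ceil_of_mem hi hi0 ha
    · exact hstep.le_ceil_of_notMem hi (hV i a ha)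

end Step

section Run

variable {crit : (Fin (T.n + 1) → ℕ) → Fin (T.n + 1) → ℝ}
  {elig : (Fin (T.n + 1) → ℕ) → Fin (T.n + 1) → Prop} {V : ℕ → Fin (T.n + 1) → ℕ}

lemma IsRun.monotone (hrun : T.IsRun crit elig V) : Monotone V :=
  monotone_nat_of_le_succ fun h =>
    let ⟨_, hstep⟩ := hrun.2 h
    hstep.le

lemma IsRun.fulfillsUpperQuota (hrun : T.IsRun crit T.ucElig V) (h : ℕ) :
    T.FulfillsUpperQuota (V h) := by
  induction h with
  | zero =>
    rw [show V 0 = 0 from funext hrun.1]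
    exact fulfillsUpperQuota_zero
  | succ h ih =>
    obtain ⟨P, hstep⟩ := hrun.2 h
    exact hstep.fulfillsUpperQuota ih

end Run

end MLA

theorem uc_quota_method_upper_quota_and_house_monotone_general (T : MLA)
    (crit : (Fin (T.n + 1) → ℕ) → Fin (T.n + 1) → ℝ) (V : ℕ → Fin (T.n + 1) → ℕ)
    (hrun : T.IsRun crit T.ucElig V) :
    (∀ h : ℕ, T.FulfillsUpperQuota (V h)) ∧ (∀ h : ℕ, ∀ i, V h i ≤ V (h + 1) i) :=
  ⟨hrun.fulfillsUpperQuota, fun h => hrun.monotone h.le_succ⟩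

/-- Any run of the upper-compliant multi-level quota method
fulfills upper quota after every number of seats, and satisfies house
monotonicity. -/
theorem uc_quota_method_upper_quota_and_house_monotone (T : MLA)
    (V : ℕ → Fin (T.n + 1) → ℕ)
    (hrun : T.IsRun T.jeffersonCrit T.ucElig V) :
    (∀ h : ℕ, T.FulfillsUpperQuota (V h)) ∧ (∀ h : ℕ, ∀ i, V h i ≤ V (h + 1) i) :=
  uc_quota_method_upper_quota_and_house_monotone_general T T.jeffersonCrit V hrun
end

section
/- For every multi-level apportionment instance and every non-negative integer h, there exists an allocation of h seats such that ⌊R_i · h⌋ ≤ V_i ≤ ⌈R_i · h⌉ for every node i, i.e., every node stays within its lower and upper quota relative to the root. -/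
/-!
Lay the nodes out as intervals: the root occupies `[0, x 0]`, and the children of a node cut its
interval into consecutive pieces of lengths `x c`. Rounding all endpoints down turns an interval
`[a, a + x i]` into the integer length `⌊a + x i⌋ - ⌊a⌋`, which lies between `⌊x i⌋` and `⌈x i⌉`
whatever `a` is, and these integer lengths are additive because consecutive intervals share
endpoints. Applied to `x i = R i * h`, this yields the allocation.
-/

lemma sum_comp_partialSum_sub {ι M N : Type*} [LinearOrder ι] [AddCommMonoid M] [AddCommGroup N]
    (s : Finset ι) (x : ι → M) (F : M → N) :
    ∑ c ∈ s, (F ((∑ d ∈ s with d < c, x d) + x c) - F (∑ d ∈ s with d < c, x d)) =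
      F (∑ c ∈ s, x c) - F 0 := by
  induction s using Finset.induction_on_max with
  | empty => simp
  | insert m s hlt ih =>
    have max_notMem : m ∉ s := fun h => (hlt m h).false
    have below_max : {d ∈ insert m s | d < m} = s := by
      rw [Finset.filter_insert, if_neg (lt_irrefl m), Finset.filter_true_of_mem hlt]
    have below_of_mem : ∀ c ∈ s, {d ∈ insert m s | d < c} = {d ∈ s | d < c} := fun c hc => by
      rw [Finset.filter_insert, if_neg (hlt c hc).not_gt]
    have sum_of_mem : ∑ c ∈ s, (F ((∑ d ∈ insert m s with d < c, x d) + x c) -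
        F (∑ d ∈ insert m s with d < c, x d)) = F (∑ c ∈ s, x c) - F 0 :=
      (Finset.sum_congr rfl fun c hc => by rw [below_of_mem c hc]).trans ih
    rw [Finset.sum_insert max_notMem, below_max, sum_of_mem, sub_add_sub_cancel,
      Finset.sum_insert max_notMem, add_comm (x m)]

lemma floor_add_le_floor_add_ceil {α : Type*} [Ring α] [LinearOrder α] [IsOrderedRing α]
    [FloorRing α] (a b : α) : ⌊a + b⌋ ≤ ⌊a⌋ + ⌈b⌉ := by
  rw [← Int.floor_add_intCast]
  gcongr
  exact Int.le_ceil b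

namespace MLA

section Entitlement

variable {T : MLA}

lemma le_of_mem_ancestors {a i : Fin (T.n + 1)} (ha : a ∈ T.ancestors i) : a ≤ i := by
  rw [ancestors] at ha
  split_ifs at ha with hi
  · rw [Finset.mem_singleton.1 ha, hi]
  · have parent_le : T.parent i ≤ i := (T.parent_lt i hi).le
    rcases Finset.mem_insert.1 ha with rfl | ha
    · exact parent_le
    · exact (le_of_mem_ancestors ha).trans parent_le
termination_by (i : ℕ)
decreasing_by exact T.parent_lt i hi

variable {i c : Fin (T.n + 1)}

lemma mem_children : c ∈ T.children i ↔ c ≠ 0 ∧ T.parent c = i := by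
  simp only [children, Finset.mem_filter_univ]

lemma R_zero : T.R 0 = 1 := by
  rw [R, ancestors, dif_pos rfl, Finset.insert_eq_of_mem (Finset.mem_singleton_self 0),
    Finset.prod_singleton, T.W_root]

lemma R_nonneg (i : Fin (T.n + 1)) : 0 ≤ T.R i :=
  Finset.prod_nonneg fun a _ => (T.W_pos a).le

lemma R_of_mem_children (hc : c ∈ T.children i) : T.R c = T.W c * T.R i := by
  obtain ⟨hc0, rfl⟩ := mem_children.1 hc
  have parent_lt : T.parent c < c := T.parent_lt c hc0
  have notMem : c ∉ insert (T.parent c) (T.ancestors (T.parent c)) := fun h => by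
    rcases Finset.mem_insert.1 h with h | h
    · exact parent_lt.ne' h
    · exact (le_of_mem_ancestors h).not_gt parent_lt
  rw [R, ancestors, dif_neg hc0, Finset.prod_insert notMem, R]

lemma sum_R_children (hi : (T.children i).Nonempty) : ∑ c ∈ T.children i, T.R c = T.R i :=
  calc ∑ c ∈ T.children i, T.R c
    _ = ∑ c ∈ T.children i, T.W c * T.R i := Finset.sum_congr rfl fun _ => R_of_mem_children
    _ = (∑ c ∈ T.children i, T.W c) * T.R i := (Finset.sum_mul ..).symm
    _ = T.R i := by rw [children, T.W_sum i hi, one_mul]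

end Entitlement

section Rounding

variable (T : MLA) (x : Fin (T.n + 1) → ℝ)

/-- The left endpoint of the interval of node `i` when the interval of each node, of length `x i`,
is cut into the consecutive intervals of its children, siblings being ordered by index. -/
noncomputable def offset (i : Fin (T.n + 1)) : ℝ :=
  if _ : i = 0 then 0
  else offset (T.parent i) + ∑ d ∈ T.children (T.parent i) with d < i, x d
termination_by (i : ℕ)
decreasing_by exact T.parent_lt i ‹i ≠ 0›

/-- The cumulative rounding of `x`: the length of the interval of node `i` after both of its
endpoints have been rounded down. It takes values in `ℤ` since `x` may be negative. -/
noncomputable def cumulativeRounding (i : Fin (T.n + 1)) : ℤ :=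
  ⌊T.offset x i + x i⌋ - ⌊T.offset x i⌋

lemma offset_zero : T.offset x 0 = 0 := by
  rw [offset, dif_pos rfl]

lemma offset_of_mem_children {i c : Fin (T.n + 1)} (hc : c ∈ T.children i) :
    T.offset x c = T.offset x i + ∑ d ∈ T.children i with d < c, x d := by
  obtain ⟨hc0, rfl⟩ := mem_children.1 hc
  rw [offset, dif_neg hc0]

lemma cumulativeRounding_zero : T.cumulativeRounding x 0 = ⌊x 0⌋ := by
  rw [cumulativeRounding, offset_zero, zero_add, Int.floor_zero, sub_zero]

lemma floor_le_cumulativeRounding (i : Fin (T.n + 1)) : ⌊x i⌋ ≤ T.cumulativeRounding x i :=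
  le_sub_iff_add_le'.2 (Int.le_floor_add _ _)

lemma cumulativeRounding_le_ceil (i : Fin (T.n + 1)) : T.cumulativeRounding x i ≤ ⌈x i⌉ :=
  sub_le_iff_le_add'.2 (floor_add_le_floor_add_ceil _ _)

lemma sum_cumulativeRounding_children {i : Fin (T.n + 1)} (hx : x i = ∑ c ∈ T.children i, x c) :
    ∑ c ∈ T.children i, T.cumulativeRounding x c = T.cumulativeRounding x i := by
  set a := T.offset x i
  calc ∑ c ∈ T.children i, T.cumulativeRounding x c
    _ = ∑ c ∈ T.children i, (⌊a + ((∑ d ∈ T.children i with d < c, x d) + x c)⌋ -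
          ⌊a + ∑ d ∈ T.children i with d < c, x d⌋) :=
        Finset.sum_congr rfl fun c hc => by
          rw [cumulativeRounding, T.offset_of_mem_children x hc, add_assoc]
    _ = ⌊a + ∑ c ∈ T.children i, x c⌋ - ⌊a + 0⌋ :=
        sum_comp_partialSum_sub (T.children i) x fun y => ⌊a + y⌋
    _ = T.cumulativeRounding x i := by rw [← hx, add_zero, cumulativeRounding]

end Rounding

end MLA

theorem exists_alloc_within_root_quotas_general (T : MLA) (x : Fin (T.n + 1) → ℝ)
    (x_nonneg : ∀ i, 0 ≤ x i)
    (x_eq_sum : ∀ i, (T.children i).Nonempty → x i = ∑ c ∈ T.children i, x c) :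
    ∃ V : Fin (T.n + 1) → ℕ, T.IsAlloc ⌊x 0⌋₊ V ∧
      ∀ i, ⌊x i⌋ ≤ (V i : ℤ) ∧ (V i : ℤ) ≤ ⌈x i⌉ := by
  have rounding_nonneg (i : Fin (T.n + 1)) : 0 ≤ T.cumulativeRounding x i :=
    (Int.floor_nonneg.2 (x_nonneg i)).trans (T.floor_le_cumulativeRounding x i)
  lift T.cumulativeRounding x to Fin (T.n + 1) → ℕ using rounding_nonneg with V hV
  have cast_V (i : Fin (T.n + 1)) : (V i : ℤ) = T.cumulativeRounding x i := congrFun hV i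
  refine ⟨V, ⟨?_, fun i hi => ?_⟩, fun i => ?_⟩
  · zify
    rw [cast_V, T.cumulativeRounding_zero, Int.natCast_floor_eq_floor (x_nonneg 0)]
  · zify
    simp only [cast_V, T.sum_cumulativeRounding_children x (x_eq_sum i hi)]
  · rw [cast_V]
    exact ⟨T.floor_le_cumulativeRounding x i, T.cumulativeRounding_le_ceil x i⟩

/-- For every multi-level apportionment instance and every
`h`, there exists an allocation of `h` seats with
`⌊R_i · h⌋ ≤ V_i ≤ ⌈R_i · h⌉` for every node `i` (quotas relative to the
root). -/
theorem exists_alloc_within_root_quotas (T : MLA) (h : ℕ) :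
    ∃ V : Fin (T.n + 1) → ℕ, T.IsAlloc h V ∧
      ∀ i, ⌊T.R i * (h : ℝ)⌋ ≤ (V i : ℤ) ∧ (V i : ℤ) ≤ ⌈T.R i * (h : ℝ)⌉ := by
  simpa only [MLA.R_zero, one_mul, Nat.floor_natCast] using
    exists_alloc_within_root_quotas_general T (fun i => T.R i * h)
      (fun i => mul_nonneg (MLA.R_nonneg i) h.cast_nonneg)
      (fun i hi => by rw [← Finset.sum_mul, MLA.sum_R_children hi])
end
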